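/- arXiv:2505.00292 — 7 statements merged into one kernel-verified Lean document; each statement's English description precedes it below -/
import Mathlib

section
/- Let X be a real-valued random variable with cumulative distribution function F_X, and let V ~ Unif(0,1) be independent of X. Define U = F_X(X^-) + V·(F_X(X) - F_X(X^-)), where F_X(x^-) = lim_{y↑x} F_X(y) denotes the left limit of F_X at x. Then U ~ Unif(0,1), i.e., P(U ≤ u) = u for every u ∈ [0,1]. -/
open MeasureTheory ProbabilityTheory

/-!
Order `ℝ × [0, 1]` lexicographically. If `X` has distribution function `F` and `V` is an independent
uniform variable, then `(x, v) ↦ F(x⁻) + v (F(x) - F(x⁻))` is the distribution function of `(X, V)`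
for this order: its value at `(q, c)` is the probability that `(X, V)` is at most `(q, c)`. The
parameter `v` fills in the jumps of `F`, so this function takes every value in `(0, 1)`, and a
monotone distribution function without gaps in its range transports its law to the uniform one.
-/

open Filter Function Set Topology

section FillJumps

variable {α : Type*} [LinearOrder α]

/-- The function `f` with its jumps filled in: as `v` runs through `[0, 1]`, the value at `(x, v)`
runs linearly from the left limit of `f` at `x` to `f x`. -/
noncomputable def fillJumps (f : α → ℝ) (p : α × ℝ) : ℝ :=
  leftLim f p.1 + p.2 * (f p.1 - leftLim f p.1)

variable {f : α → ℝ}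

lemma sub_leftLim_nonneg (hf : Monotone f) (x : α) : 0 ≤ f x - leftLim f x :=
  sub_nonneg.2 (hf.leftLim_le le_rfl)

lemma leftLim_le_fillJumps (hf : Monotone f) {p : α × ℝ} (hp : 0 ≤ p.2) :
    leftLim f p.1 ≤ fillJumps f p :=
  le_add_of_nonneg_right (mul_nonneg hp (sub_leftLim_nonneg hf p.1))

lemma fillJumps_le (hf : Monotone f) {p : α × ℝ} (hp : p.2 ≤ 1) : fillJumps f p ≤ f p.1 := by
  unfold fillJumps
  linarith [mul_le_of_le_one_left (sub_leftLim_nonneg hf p.1) hp]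

lemma fillJumps_le_fillJumps (hf : Monotone f) {p q : α × ℝ}
    (hp : p.2 ≤ 1) (hq : 0 ≤ q.2) (hpq : toLex p ≤ toLex q) : fillJumps f p ≤ fillJumps f q := by
  rcases Prod.Lex.toLex_le_toLex.1 hpq with hlt | ⟨heq, hle⟩
  · calc fillJumps f p ≤ f p.1 := fillJumps_le hf hp
      _ ≤ leftLim f q.1 := hf.le_leftLim hlt
      _ ≤ fillJumps f q := leftLim_le_fillJumps hf hq
  · have hjump := sub_leftLim_nonneg hf q.1
    simp only [fillJumps, heq]
    gcongr

lemma measurable_fillJumps [TopologicalSpace α] [OrderClosedTopology α] [MeasurableSpace α]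
    [BorelSpace α] (hf : Monotone f) : Measurable (fillJumps f) := by
  have hf_meas : Measurable f := hf.measurable
  have hleft_meas : Measurable (leftLim f) := hf.leftLim.measurable
  unfold fillJumps
  fun_prop

end FillJumps

section Uniform

/-- The uniform distribution on `[0, 1]`. -/
noncomputable abbrev uniform01 : Measure ℝ := volume.restrict (Icc 0 1)

instance : IsProbabilityMeasure uniform01 := ⟨by simp⟩

lemma uniform01_Iic (u : ℝ) : uniform01 (Iic u) = ENNReal.ofReal (min u 1) := by
  have hset : Iic u ∩ Icc 0 1 = Icc 0 (min u 1) := by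
    ext x
    simp only [mem_inter_iff, mem_Iic, mem_Icc, le_min_iff]
    tauto
  rw [Measure.restrict_apply measurableSet_Iic, hset, Real.volume_Icc, sub_zero]

lemma eq_uniform01_of_Iio_le_of_le_Iic {ν : Measure ℝ} [IsProbabilityMeasure ν]
    (hIio : ∀ u ∈ Ioo (0 : ℝ) 1, ν (Iio u) ≤ ENNReal.ofReal u)
    (hIic : ∀ u ∈ Ioo (0 : ℝ) 1, ENNReal.ofReal u ≤ ν (Iic u)) : ν = uniform01 := by
  refine Measure.ext_of_Iic _ _ fun u ↦ ?_
  rw [← measureReal_eq_measureReal_iff, measureReal_def uniform01, uniform01_Iic,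
    ENNReal.toReal_ofReal']
  refine le_antisymm (le_of_forall_gt_imp_ge_of_dense fun w hw ↦ ?_)
    (le_of_forall_lt_imp_le_of_dense fun w hw ↦ ?_)
  · obtain ⟨hmin, hw0⟩ := max_lt_iff.1 hw
    rcases le_or_gt 1 w with hw1 | hw1
    · exact measureReal_le_one.trans hw1
    · have huw : u < w := (min_lt_iff.1 hmin).resolve_right hw1.not_gt
      calc ν.real (Iic u) ≤ ν.real (Iio w) := measureReal_mono (Iic_subset_Iio.2 huw)
        _ ≤ w := ENNReal.toReal_le_of_le_ofReal hw0.le (hIio w ⟨hw0, hw1⟩)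
  · rcases le_or_gt w 0 with hw0 | hw0
    · exact hw0.trans measureReal_nonneg
    · obtain ⟨hwu, hw1⟩ := lt_min_iff.1 ((lt_max_iff.1 hw).resolve_right hw0.not_gt)
      calc w ≤ ν.real (Iic w) :=
            (ENNReal.ofReal_le_iff_le_toReal (measure_ne_top _ _)).1 (hIic w ⟨hw0, hw1⟩)
        _ ≤ ν.real (Iic u) := measureReal_mono (Iic_subset_Iic.2 hwu.le)

end Uniform

section Stieltjes

variable {f : StieltjesFunction ℝ}

lemma exists_leftLim_le_le {a b u : ℝ} (ha : f a < u) (hb : u ≤ f b) :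
    ∃ q, leftLim f q ≤ u ∧ u ≤ f q := by
  have hne : {x | u ≤ f x}.Nonempty := ⟨b, hb⟩
  have hbdd : BddBelow {x | u ≤ f x} :=
    ⟨a, fun x hx ↦ (f.mono.reflect_lt (ha.trans_le hx)).le⟩
  refine ⟨sInf {x | u ≤ f x}, ?_, ?_⟩
  · rw [f.mono.leftLim_eq_sSup]
    refine csSup_le (nonempty_Iio.image f) (forall_mem_image.2 fun x hx ↦ ?_)
    exact (not_le.1 fun h ↦ notMem_of_lt_csInf hx hbdd h).le
  · rw [← f.iInf_Ioi_eq]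
    refine le_ciInf fun ⟨x, hx⟩ ↦ ?_
    obtain ⟨y, hy, hyx⟩ := exists_lt_of_csInf_lt hne hx
    exact hy.trans (f.mono hyx.le)

lemma exists_fillJumps_eq {a b u : ℝ} (ha : f a < u) (hb : u ≤ f b) :
    ∃ p : ℝ × ℝ, p.2 ∈ Icc 0 1 ∧ fillJumps f p = u := by
  obtain ⟨q, hleft, hright⟩ := exists_leftLim_le_le ha hb
  have hu : u ∈ segment ℝ (leftLim f q) (f q) := by
    rw [segment_eq_Icc (hleft.trans hright)]
    exact ⟨hleft, hright⟩
  rw [segment_eq_image'] at hu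
  obtain ⟨v, hv, hvu⟩ := hu
  exact ⟨(q, v), hv, hvu⟩

lemma measure_prod_setOf_toLex_le {l : ℝ} (hf : Tendsto f atBot (𝓝 l)) {p : ℝ × ℝ}
    (hp : p.2 ∈ Icc 0 1) :
    (f.measure.prod uniform01) {x | toLex x ≤ toLex p} = ENNReal.ofReal (fillJumps f p - l) := by
  have hset : {x : ℝ × ℝ | toLex x ≤ toLex p} = Iio p.1 ×ˢ univ ∪ {p.1} ×ˢ Iic p.2 := by
    ext x
    simp [Prod.Lex.toLex_le_toLex]
  have hdisj : Disjoint (Iio p.1 ×ˢ (univ : Set ℝ)) ({p.1} ×ˢ Iic p.2) :=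
    Disjoint.set_prod_left (by simp) _ _
  have hjump : 0 ≤ f p.1 - leftLim f p.1 := sub_leftLim_nonneg f.mono p.1
  have hl : 0 ≤ leftLim f p.1 - l :=
    sub_nonneg.2 (f.mono.leftLim.le_of_tendsto (tendsto_leftLim_atBot_of_tendsto hf) p.1)
  rw [hset, measure_union hdisj ((measurableSet_singleton _).prod measurableSet_Iic),
    Measure.prod_prod, Measure.prod_prod, f.measure_Iio hf, f.measure_singleton, measure_univ,
    mul_one, uniform01_Iic, min_eq_left hp.2, ← ENNReal.ofReal_mul hjump,
    ← ENNReal.ofReal_add hl (mul_nonneg hjump hp.1)]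
  congr 1
  simp only [fillJumps]
  ring

end Stieltjes

lemma exists_fillJumps_cdf_eq (μ : Measure ℝ) {u : ℝ} (hu : u ∈ Ioo (0 : ℝ) 1) :
    ∃ p : ℝ × ℝ, p.2 ∈ Icc 0 1 ∧ fillJumps (cdf μ) p = u := by
  obtain ⟨a, ha⟩ := ((tendsto_cdf_atBot μ).eventually_lt_const hu.1).exists
  obtain ⟨b, hb⟩ := ((tendsto_cdf_atTop μ).eventually_const_lt hu.2).exists
  exact exists_fillJumps_eq ha hb.le

theorem map_fillJumps_cdf (μ : Measure ℝ) [IsProbabilityMeasure μ] :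
    (μ.prod uniform01).map (fillJumps (cdf μ)) = uniform01 := by
  have hmono : Monotone (cdf μ) := monotone_cdf μ
  have hmeas : Measurable (fillJumps (cdf μ)) := measurable_fillJumps hmono
  have : IsProbabilityMeasure ((μ.prod uniform01).map (fillJumps (cdf μ))) :=
    Measure.isProbabilityMeasure_map hmeas.aemeasurable
  have hv : ∀ᵐ x ∂μ.prod uniform01, x.2 ∈ Icc (0 : ℝ) 1 :=
    Measure.quasiMeasurePreserving_snd.ae (ae_restrict_mem measurableSet_Icc)
  have hlex : ∀ p : ℝ × ℝ, p.2 ∈ Icc 0 1 →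
      (μ.prod uniform01) {x | toLex x ≤ toLex p} = ENNReal.ofReal (fillJumps (cdf μ) p) := by
    intro p hp
    simpa only [measure_cdf, sub_zero] using
      measure_prod_setOf_toLex_le (tendsto_cdf_atBot μ) hp
  refine eq_uniform01_of_Iio_le_of_le_Iic (fun u hu ↦ ?_) (fun u hu ↦ ?_)
  · obtain ⟨p, hp, rfl⟩ := exists_fillJumps_cdf_eq μ hu
    rw [Measure.map_apply hmeas measurableSet_Iio, ← hlex p hp]
    refine measure_mono_ae ?_
    filter_upwards [hv] with x hx hxp
    refine (le_total (toLex x) (toLex p)).resolve_right fun hpx ↦ ?_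
    exact (fillJumps_le_fillJumps hmono hp.2 hx.1 hpx).not_gt hxp
  · obtain ⟨p, hp, rfl⟩ := exists_fillJumps_cdf_eq μ hu
    rw [Measure.map_apply hmeas measurableSet_Iic, ← hlex p hp]
    refine measure_mono_ae ?_
    filter_upwards [hv] with x hx hxp
    exact fillJumps_le_fillJumps hmono hx.2 hp.1 hxp

/-- **Randomized probability integral transform.** If `X` is a real-valued random variable with
cdf `F`, and `V ~ Unif(0,1)` is independent of `X`, then
`U = F(X⁻) + V·(F(X) - F(X⁻))` is distributed as `Unif(0,1)`. -/
theorem randomized_pit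
    {Ω : Type*} [MeasureSpace Ω] [IsProbabilityMeasure (ℙ : Measure Ω)]
    (X V : Ω → ℝ) (hX : Measurable X) (hV : Measurable V)
    (hVunif : Measure.map V ℙ = volume.restrict (Set.Icc (0 : ℝ) 1))
    (hindep : IndepFun X V ℙ)
    (F : ℝ → ℝ) (hF : ∀ x, F x = (ℙ {ω | X ω ≤ x}).toReal)
    (U : Ω → ℝ)
    (hU : ∀ ω, U ω = Function.leftLim F (X ω)
      + V ω * (F (X ω) - Function.leftLim F (X ω))) :
    ∀ u ∈ Set.Icc (0 : ℝ) 1, ℙ {ω | U ω ≤ u} = ENNReal.ofReal u := by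
  intro u hu
  set μ := Measure.map X ℙ
  have : IsProbabilityMeasure μ := Measure.isProbabilityMeasure_map hX.aemeasurable
  have hF_cdf : F = cdf μ := by
    ext x
    rw [hF, cdf_eq_real, map_measureReal_apply hX measurableSet_Iic]
    rfl
  have hU_fill : U = fillJumps (cdf μ) ∘ fun ω ↦ (X ω, V ω) :=
    funext fun ω ↦ hF_cdf ▸ hU ω
  have hfill_meas : Measurable (fillJumps (cdf μ)) := measurable_fillJumps (monotone_cdf μ)
  have hXV_law : Measure.map (fun ω ↦ (X ω, V ω)) ℙ = μ.prod uniform01 := by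
    rw [(indepFun_iff_map_prod_eq_prod_map_map hX.aemeasurable hV.aemeasurable).1 hindep, hVunif]
  have hU_law : Measure.map U ℙ = uniform01 := by
    rw [hU_fill, ← Measure.map_map hfill_meas (hX.prodMk hV), hXV_law, map_fillJumps_cdf]
  have hU_meas : Measurable U := hU_fill ▸ hfill_meas.comp (hX.prodMk hV)
  calc ℙ {ω | U ω ≤ u} = uniform01 (Iic u) := by
        rw [← hU_law, Measure.map_apply hU_meas measurableSet_Iic]
        rfl
    _ = ENNReal.ofReal u := by rw [uniform01_Iic, min_eq_left hu.2]
end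

section
/- Let X be a real-valued random variable with cumulative distribution function F_X, let V ~ Unif(0,1) be independent of X, and define U = F_X(X^-) + V·(F_X(X) - F_X(X^-)). Fix u ∈ (0,1) and let F_X^{-1}(u) = inf{z ∈ ℝ : F_X(z) ≥ u}. Then P(U ≤ u and X < F_X^{-1}(u)) = F_X(F_X^{-1}(u)^-), the left limit of F_X at the point F_X^{-1}(u). -/
open MeasureTheory ProbabilityTheory

/-!
Below the `u`-quantile the cdf `F` is less than `u`. The randomized transform at `X` lies on the
segment from `F(X⁻)` to `F(X)`, hence is at most `F(X)`. So on `{X < F⁻¹(u)}` the event `{U ≤ u}`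
is almost sure, and the probability in question is that of `{X < F⁻¹(u)}`.
-/

/-- The randomized probability integral transform of `x` with respect to `F`, with randomization
level `v`: the jump of `F` at `x` is filled in linearly, reaching `F x` at `v = 1`. -/
noncomputable def randomizedPIT (F : ℝ → ℝ) (x v : ℝ) : ℝ :=
  Function.leftLim F x + v * (F x - Function.leftLim F x)

theorem randomizedPIT_le_self {F : ℝ → ℝ} (hF : Monotone F) (x : ℝ) {v : ℝ} (hv : v ≤ 1) :
    randomizedPIT F x v ≤ F x := by
  have jump_nonneg : 0 ≤ F x - Function.leftLim F x := sub_nonneg.2 (hF.leftLim_le le_rfl)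
  calc
    randomizedPIT F x v ≤ Function.leftLim F x + (F x - Function.leftLim F x) := by
      unfold randomizedPIT
      gcongr
      exact mul_le_of_le_one_left jump_nonneg hv
    _ = F x := add_sub_cancel _ _

theorem bddBelow_setOf_le_of_tendsto_atBot {α β : Type*} [LinearOrder α] [Nonempty α]
    [LinearOrder β] [TopologicalSpace β] [ClosedIciTopology β] {f : α → β} {a u : β}
    (hf : Filter.Tendsto f Filter.atBot (nhds a)) (hu : a < u) : BddBelow {x | u ≤ f x} := by
  obtain ⟨b, hb⟩ := Filter.eventually_atBot.1 (hf.eventually_lt_const hu)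
  exact ⟨b, fun x hx ↦ le_of_not_ge fun hxb ↦ (hb x hxb).not_ge hx⟩

theorem measure_Iio_eq_ofReal_leftLim_cdf (μ : Measure ℝ) [IsProbabilityMeasure μ] (x : ℝ) :
    μ (Set.Iio x) = ENNReal.ofReal (Function.leftLim (cdf μ) x) := by
  conv_lhs => rw [← measure_cdf μ]
  rw [StieltjesFunction.measure_Iio _ (tendsto_cdf_atBot μ), sub_zero]

section RandomVariable

variable {Ω : Type*} {mΩ : MeasurableSpace Ω} {P : Measure Ω}

theorem eq_cdf_map_of_forall_eq_real [IsProbabilityMeasure P] {X : Ω → ℝ} (hX : AEMeasurable X P)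
    {F : ℝ → ℝ} (hF : ∀ x, F x = P.real {ω | X ω ≤ x}) : F = cdf (P.map X) := by
  have := Measure.isProbabilityMeasure_map hX
  funext x
  rw [hF, cdf_eq_real, map_measureReal_apply_of_aemeasurable hX measurableSet_Iic]
  rfl

theorem ae_mem_of_map_eq_restrict {E : Type*} [MeasurableSpace E] {ν : Measure E} {f : Ω → E}
    {s : Set E} (hf : AEMeasurable f P) (hs : MeasurableSet s) (h : P.map f = ν.restrict s) :
    ∀ᵐ ω ∂P, f ω ∈ s :=
  ae_of_ae_map hf (h ▸ ae_restrict_mem hs)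

theorem setOf_randomizedPIT_le_and_lt_ae_eq {F : ℝ → ℝ} (hF : Monotone F) {X V : Ω → ℝ}
    (hV : ∀ᵐ ω ∂P, V ω ≤ 1) {u q : ℝ} (hq : q ∈ lowerBounds {z | u ≤ F z}) :
    {ω | randomizedPIT F (X ω) (V ω) ≤ u ∧ X ω < q} =ᵐ[P] X ⁻¹' Set.Iio q := by
  filter_upwards [hV] with ω hVω
  refine propext (and_iff_right_of_imp fun hXq ↦ ?_)
  have cdf_lt : F (X ω) < u := lt_of_not_ge fun hu ↦ (hq hu).not_gt hXq
  exact (randomizedPIT_le_self hF (X ω) hVω).trans cdf_lt.le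

theorem randomized_pit_below_quantile_general [IsProbabilityMeasure P] {X V : Ω → ℝ}
    (hX : AEMeasurable X P) (hV : ∀ᵐ ω ∂P, V ω ≤ 1)
    {F : ℝ → ℝ} (hF : ∀ x, F x = P.real {ω | X ω ≤ x})
    {U : Ω → ℝ} (hU : ∀ ω, U ω = randomizedPIT F (X ω) (V ω))
    {u q : ℝ} (hq : q ∈ lowerBounds {z | u ≤ F z}) :
    P {ω | U ω ≤ u ∧ X ω < q} = ENNReal.ofReal (Function.leftLim F q) := by
  have := Measure.isProbabilityMeasure_map hX
  obtain rfl := eq_cdf_map_of_forall_eq_real hX hF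
  simp only [hU]
  calc
    P {ω | randomizedPIT (cdf (P.map X)) (X ω) (V ω) ≤ u ∧ X ω < q} = P (X ⁻¹' Set.Iio q) :=
      measure_congr (setOf_randomizedPIT_le_and_lt_ae_eq (monotone_cdf _) hV hq)
    _ = P.map X (Set.Iio q) := (Measure.map_apply_of_aemeasurable hX measurableSet_Iio).symm
    _ = ENNReal.ofReal (Function.leftLim (cdf (P.map X)) q) :=
      measure_Iio_eq_ofReal_leftLim_cdf _ _

end RandomVariable

/-- First term in the decomposition of the randomized probability integral transform:
`P(U ≤ u, X < F⁻¹(u)) = F(F⁻¹(u)⁻)`, the left limit of the cdf at the quantile. -/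
theorem randomized_pit_below_quantile
    {Ω : Type*} [MeasureSpace Ω] [IsProbabilityMeasure (ℙ : Measure Ω)]
    (X V : Ω → ℝ) (hX : Measurable X) (hV : Measurable V)
    (hVunif : Measure.map V ℙ = volume.restrict (Set.Icc (0 : ℝ) 1))
    (hindep : IndepFun X V ℙ)
    (F : ℝ → ℝ) (hF : ∀ x, F x = (ℙ {ω | X ω ≤ x}).toReal)
    (U : Ω → ℝ)
    (hU : ∀ ω, U ω = Function.leftLim F (X ω)
      + V ω * (F (X ω) - Function.leftLim F (X ω)))
    (u : ℝ) (hu : u ∈ Set.Ioo (0 : ℝ) 1)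
    (Finv : ℝ) (hFinv : Finv = sInf {z : ℝ | u ≤ F z}) :
    ℙ {ω | U ω ≤ u ∧ X ω < Finv} = ENNReal.ofReal (Function.leftLim F Finv) := by
  have V_le_one : ∀ᵐ ω, V ω ≤ 1 :=
    (ae_mem_of_map_eq_restrict hV.aemeasurable measurableSet_Icc hVunif).mono fun _ h ↦ h.2
  have tendsto_F : Filter.Tendsto F Filter.atBot (nhds 0) :=
    eq_cdf_map_of_forall_eq_real hX.aemeasurable hF ▸ tendsto_cdf_atBot _
  exact randomized_pit_below_quantile_general hX.aemeasurable V_le_one hF hU fun _ hz ↦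
    hFinv ▸ csInf_le (bddBelow_setOf_le_of_tendsto_atBot tendsto_F hu.1) hz
end

section
/- Let X be a real-valued random variable with cumulative distribution function F_X, let V ~ Unif(0,1) be independent of X, and define U = F_X(X^-) + V·(F_X(X) - F_X(X^-)). Fix u ∈ (0,1) and let F_X^{-1}(u) = inf{z ∈ ℝ : F_X(z) ≥ u}. Then P(U ≤ u and X = F_X^{-1}(u)) = u - F_X(F_X^{-1}(u)^-). -/
open MeasureTheory ProbabilityTheory

/-!
On the event `X = x` the condition `U ≤ u` only concerns `V`, so by independence the probability of
`U ≤ u, X = x` is the jump `d = F(x) - F(x⁻)` times the probability of `V * d ≤ u - F(x⁻)`. As `V`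
is uniform, this product is the length of the part of the jump interval `[F(x⁻), F(x)]` lying below
`u`, that is, the positive part of `min u (F(x)) - F(x⁻)`. At `x = F⁻¹(u)` right continuity gives
`u ≤ F(x)`.
-/

/-- The quantile transformation (generalized inverse) `f⁻¹(u) = inf {z | u ≤ f z}`. Over `ℝ` it
takes the junk value `0` when the set is empty or unbounded below. -/
noncomputable def quantile {α β : Type*} [InfSet α] [LE β] (f : α → β) (u : β) : α :=
  sInf {z | u ≤ f z}

theorem le_apply_quantile {R : Type*} [ConditionallyCompleteLinearOrder R] [TopologicalSpace R]
    [OrderTopology R] [DenselyOrdered R] [NoMaxOrder R] (f : StieltjesFunction R) {u : ℝ}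
    (hne : {z | u ≤ f z}.Nonempty) : u ≤ f (quantile f u) := by
  rw [← f.iInf_Ioi_eq]
  refine le_ciInf fun ⟨z, hz⟩ ↦ ?_
  obtain ⟨w, huw, hwz⟩ := exists_lt_of_csInf_lt hne hz
  exact huw.trans (f.mono hwz.le)

theorem le_cdf_quantile (ν : Measure ℝ) {u : ℝ} (hu : u < 1) :
    u ≤ cdf ν (quantile (cdf ν) u) :=
  le_apply_quantile (cdf ν) ((tendsto_cdf_atTop ν).eventually_const_le hu).exists

theorem measure_singleton_eq_ofReal_cdf_sub_leftLim (ν : Measure ℝ) [IsProbabilityMeasure ν]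
    (x : ℝ) : ν {x} = ENNReal.ofReal (cdf ν x - Function.leftLim (cdf ν) x) := by
  rw [← StieltjesFunction.measure_singleton, measure_cdf]

theorem cdf_eq_measureReal_of_hasLaw {Ω : Type*} [MeasurableSpace Ω] {μ : Measure Ω}
    {X : Ω → ℝ} {ν : Measure ℝ} [IsProbabilityMeasure ν] (hX : HasLaw X ν μ) (x : ℝ) :
    cdf ν x = μ.real {ω | X ω ≤ x} :=
  (cdf_eq_real ν x).trans (hX.measureReal_eq measurableSet_Iic).symm

theorem ofReal_mul_volume_restrict_Icc_setOf_mul_le {d : ℝ} (hd : 0 ≤ d) (t : ℝ) :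
    ENNReal.ofReal d * volume.restrict (Set.Icc 0 1) {v : ℝ | v * d ≤ t} =
      ENNReal.ofReal (min t d) := by
  rcases hd.eq_or_lt with rfl | hd
  · simp
  have hset : {v : ℝ | v * d ≤ t} ∩ Set.Icc 0 1 = Set.Icc 0 (min (t / d) 1) := by
    ext v
    simp only [Set.mem_inter_iff, Set.mem_ofPred_eq, Set.mem_Icc, le_min_iff, le_div_iff₀ hd]
    tauto
  calc ENNReal.ofReal d * volume.restrict (Set.Icc 0 1) {v : ℝ | v * d ≤ t}
      = ENNReal.ofReal d * ENNReal.ofReal (min (t / d) 1) := by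
        rw [Measure.restrict_apply' measurableSet_Icc, hset, Real.volume_Icc, sub_zero]
    _ = ENNReal.ofReal (min t d) := by
        rw [← ENNReal.ofReal_mul hd.le, mul_min_of_nonneg _ _ hd.le, mul_div_cancel₀ t hd.ne',
          mul_one]

theorem randomizedPIT_le_iff {F : ℝ → ℝ} {x v u : ℝ} :
    randomizedPIT F x v ≤ u ↔
      v * (F x - Function.leftLim F x) ≤ u - Function.leftLim F x :=
  le_sub_iff_add_le'.symm

theorem measurableSet_setOf_randomizedPIT_le (F : ℝ → ℝ) (x u : ℝ) :
    MeasurableSet {v | randomizedPIT F x v ≤ u} :=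
  measurableSet_le (by unfold randomizedPIT; fun_prop) measurable_const

theorem ofReal_jump_mul_volume_restrict_Icc_setOf_randomizedPIT_le {F : ℝ → ℝ} (hF : Monotone F)
    (x u : ℝ) :
    ENNReal.ofReal (F x - Function.leftLim F x) *
        volume.restrict (Set.Icc 0 1) {v | randomizedPIT F x v ≤ u} =
      ENNReal.ofReal (min u (F x) - Function.leftLim F x) := by
  have hjump : 0 ≤ F x - Function.leftLim F x := sub_nonneg.2 (hF.leftLim_le le_rfl)
  simp only [randomizedPIT_le_iff]
  rw [ofReal_mul_volume_restrict_Icc_setOf_mul_le hjump, min_sub_sub_right]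

theorem measure_setOf_and_eq_of_indepFun {Ω α β : Type*} [MeasurableSpace Ω] [MeasurableSpace α]
    [MeasurableSingletonClass α] [MeasurableSpace β] {μ : Measure Ω} {X : Ω → α} {V : Ω → β}
    (hindep : IndepFun X V μ) {p : α → β → Prop} {x : α} (hp : MeasurableSet {v | p x v}) :
    μ {ω | p (X ω) (V ω) ∧ X ω = x} = μ {ω | X ω = x} * μ {ω | p x (V ω)} := by
  have hset : {ω | p (X ω) (V ω) ∧ X ω = x} = X ⁻¹' {x} ∩ V ⁻¹' {v | p x v} := by
    ext ω
    exact ⟨fun ⟨h, hx⟩ ↦ ⟨hx, hx ▸ h⟩, fun ⟨hx, h⟩ ↦ ⟨hx.symm ▸ h, hx⟩⟩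
  rw [hset]
  exact hindep.measure_inter_preimage_eq_mul _ _ (measurableSet_singleton x) hp

theorem randomized_pit_at_quantile_general {Ω : Type*} [MeasurableSpace Ω] {μ : Measure Ω}
    {X V : Ω → ℝ} {ν : Measure ℝ} [IsProbabilityMeasure ν] (hX : HasLaw X ν μ)
    (hV : HasLaw V (volume.restrict (Set.Icc 0 1)) μ) (hindep : IndepFun X V μ) (x u : ℝ) :
    μ {ω | randomizedPIT (cdf ν) (X ω) (V ω) ≤ u ∧ X ω = x} =
      ENNReal.ofReal (min u (cdf ν x) - Function.leftLim (cdf ν) x) := by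
  have hmeas := measurableSet_setOf_randomizedPIT_le (cdf ν) x u
  calc μ {ω | randomizedPIT (cdf ν) (X ω) (V ω) ≤ u ∧ X ω = x}
      = μ {ω | X ω = x} * μ {ω | randomizedPIT (cdf ν) x (V ω) ≤ u} :=
        measure_setOf_and_eq_of_indepFun hindep (p := fun x v ↦ randomizedPIT (cdf ν) x v ≤ u) hmeas
    _ = ν {x} * volume.restrict (Set.Icc 0 1) {v | randomizedPIT (cdf ν) x v ≤ u} :=
        congrArg₂ (· * ·) (hX.measure_eq (measurableSet_singleton x)) (hV.measure_eq hmeas)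
    _ = ENNReal.ofReal (min u (cdf ν x) - Function.leftLim (cdf ν) x) := by
        rw [measure_singleton_eq_ofReal_cdf_sub_leftLim,
          ofReal_jump_mul_volume_restrict_Icc_setOf_randomizedPIT_le (monotone_cdf ν)]

/-- Second term in the decomposition of the randomized probability integral transform:
`P(U ≤ u, X = F⁻¹(u)) = u - F(F⁻¹(u)⁻)`. -/
theorem randomized_pit_at_quantile
    {Ω : Type*} [MeasureSpace Ω] [IsProbabilityMeasure (ℙ : Measure Ω)]
    (X V : Ω → ℝ) (hX : Measurable X) (hV : Measurable V)
    (hVunif : Measure.map V ℙ = volume.restrict (Set.Icc (0 : ℝ) 1))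
    (hindep : IndepFun X V ℙ)
    (F : ℝ → ℝ) (hF : ∀ x, F x = (ℙ {ω | X ω ≤ x}).toReal)
    (U : Ω → ℝ)
    (hU : ∀ ω, U ω = Function.leftLim F (X ω)
      + V ω * (F (X ω) - Function.leftLim F (X ω)))
    (u : ℝ) (hu : u ∈ Set.Ioo (0 : ℝ) 1)
    (Finv : ℝ) (hFinv : Finv = sInf {z : ℝ | u ≤ F z}) :
    ℙ {ω | U ω ≤ u ∧ X ω = Finv} = ENNReal.ofReal (u - Function.leftLim F Finv) := by
  have := Measure.isProbabilityMeasure_map (μ := ℙ) hX.aemeasurable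
  have hXlaw : HasLaw X (Measure.map X ℙ) ℙ := ⟨hX.aemeasurable, rfl⟩
  have hVlaw : HasLaw V (volume.restrict (Set.Icc 0 1)) ℙ := ⟨hV.aemeasurable, hVunif⟩
  obtain rfl : F = cdf (Measure.map X ℙ) :=
    funext fun x ↦ (hF x).trans (cdf_eq_measureReal_of_hasLaw hXlaw x).symm
  have hle : u ≤ cdf (Measure.map X ℙ) Finv := hFinv ▸ le_cdf_quantile _ hu.2
  simp only [hU]
  exact (randomized_pit_at_quantile_general hXlaw hVlaw hindep Finv u).trans
    (by rw [min_eq_left hle])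
end

section
/- Let (κ_1, ..., κ_r) be exchangeable real-valued random variables and let θ ~ Unif(0,1) be independent of (κ_1, ..., κ_r). Define the randomized conformal p-value p = (1/r) Σ_{j=1}^r (1{κ_j > κ_r} + θ·1{κ_j = κ_r}). Then p ~ Unif(0,1), i.e., P(p ≤ u) = u for every u ∈ [0,1]. -/
open MeasureTheory ProbabilityTheory

/-!
Fix the scores `x` and average over the choice of the reference index instead. If `#{j | x j = v}`
scores are tied at the value `v`, then for a reference index in this tie class the unnormalised
p-value is uniform on the interval `[#{j | v < x j}, #{j | v ≤ x j}]`, whose length is the size of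
the class. As `v` runs over the values of `x` these intervals tile `[0, r]`, so the p-value for a
uniformly random reference index is uniform on `[0, 1]`, whatever `x` is. Exchangeability makes
the distribution of the p-value independent of the reference index, so each one gives the average.
-/

open Set
open scoped Finset ENNReal

section Counting

lemma sum_filter_le_sub_filter_lt {α G : Type*} [LinearOrder α] [AddCommGroup G] (s : Finset α)
    (f : Finset α → G) :
    ∑ v ∈ s, (f {w ∈ s | v ≤ w} - f {w ∈ s | v < w}) = f s - f ∅ := by
  induction s using Finset.induction_on_min with
  | empty => simp
  | insert a s ha ih =>
    have filter_le_min : {w ∈ insert a s | a ≤ w} = insert a s :=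
      Finset.filter_true_of_mem <| Finset.forall_mem_insert .. |>.2
        ⟨le_rfl, fun w hw ↦ (ha w hw).le⟩
    have filter_min_lt : {w ∈ insert a s | a < w} = s := by
      rw [Finset.filter_insert, if_neg (lt_irrefl a), Finset.filter_true_of_mem ha]
    have erase_min : ∀ v ∈ s, f {w ∈ insert a s | v ≤ w} - f {w ∈ insert a s | v < w} =
        f {w ∈ s | v ≤ w} - f {w ∈ s | v < w} := fun v hv ↦ by
      rw [Finset.filter_insert, Finset.filter_insert, if_neg (ha v hv).not_ge,
        if_neg (ha v hv).not_gt]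
    rw [Finset.sum_insert fun h ↦ lt_irrefl a (ha a h), filter_le_min, filter_min_lt,
      Finset.sum_congr rfl erase_min, ih, sub_add_sub_cancel]

variable {ι α : Type*} [Fintype ι]

lemma card_filter_eq_apply_pos [DecidableEq α] (x : ι → α) (i : ι) : 0 < #{j | x j = x i} :=
  Finset.card_pos.2 ⟨i, by simp⟩

lemma sum_div_card_filter_eq [DecidableEq α] {K : Type*} [Field K] [CharZero K]
    (x : ι → α) (g : α → K) :
    ∑ i, g (x i) / #{j | x j = x i} = ∑ v ∈ Finset.univ.image x, g v := by
  rw [Finset.sum_comp (fun v ↦ g v / #{j | x j = v}) x]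
  refine Finset.sum_congr rfl fun v hv ↦ ?_
  obtain ⟨i, -, rfl⟩ := Finset.mem_image.1 hv
  rw [nsmul_eq_mul, mul_div_cancel₀ _ (Nat.cast_ne_zero.2 (card_filter_eq_apply_pos x i).ne')]

variable [LinearOrder α]

lemma card_filter_lt_add_card_filter_eq (x : ι → α) (v : α) :
    #{j | v < x j} + #{j | x j = v} = #{j | v ≤ x j} := by
  classical
  rw [← Finset.card_union_of_disjoint (Finset.disjoint_filter.2 fun _ _ h ↦ h.ne'),
    ← Finset.filter_or]
  simp only [le_iff_lt_or_eq, eq_comm]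

lemma sum_sub_div_card_filter_eq {K : Type*} [Field K] [CharZero K] (x : ι → α) (f : ℕ → K) :
    ∑ i, (f #{j | x i ≤ x j} - f #{j | x i < x j}) / #{j | x j = x i} =
      f (Fintype.card ι) - f 0 := by
  rw [sum_div_card_filter_eq x fun v ↦ f #{j | v ≤ x j} - f #{j | v < x j}]
  simpa using
    sum_filter_le_sub_filter_lt (Finset.univ.image x) fun s ↦ f #{j | x j ∈ s}

end Counting

lemma volume_restrict_Icc_setOf_add_mul_le (a s : ℝ) {b : ℝ} (hb : 0 < b) :
    volume.restrict (Icc 0 1) {t : ℝ | a + t * b ≤ s} =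
      ENNReal.ofReal ((min s (a + b) - min s a) / b) := by
  have section_eq_Icc :
      {t : ℝ | a + t * b ≤ s} ∩ Icc 0 1 = Icc 0 (min ((s - a) / b) 1) := by
    ext t
    simp only [mem_inter_iff, mem_ofPred_eq, mem_Icc, le_min_iff, le_div_iff₀ hb,
      le_sub_iff_add_le']
    tauto
  rw [Measure.restrict_apply (measurableSet_le (by fun_prop) (by fun_prop)), section_eq_Icc,
    Real.volume_Icc, sub_zero]
  rcases le_total a s with has | hsa
  · rw [min_eq_right has, ← min_sub_sub_right, add_sub_cancel_left,
      ← min_div_div_right hb.le, div_self hb.ne']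
  · rw [min_eq_left hsa, min_eq_left (show s ≤ a + b by linarith), sub_self, zero_div,
      ENNReal.ofReal_zero, ENNReal.ofReal_eq_zero]
    exact (min_le_left _ _).trans (div_nonpos_of_nonpos_of_nonneg (sub_nonpos.2 hsa) hb.le)

section ConformalPValue

variable {ι α : Type*} [Fintype ι] [LinearOrder α]

/-- The randomized conformal p-value of the score `x i` among the scores `x`, the ties
(`j = i` included) being broken by `t`, which plays the role of `θ`. The sum of the indicators is
encoded by the cardinalities of the sets that they describe. -/
noncomputable def conformalPValue (x : ι → α) (i : ι) (t : ℝ) : ℝ :=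
  (#{j | x i < x j} + t * #{j | x j = x i}) / Fintype.card ι

lemma conformalPValue_comp_perm (x : ι → α) (σ : Equiv.Perm ι) (i : ι) (t : ℝ) :
    conformalPValue (x ∘ σ) i t = conformalPValue x (σ i) t := by
  have card_filter_comp (q : ι → Prop) [DecidablePred q] : #{j | q (σ j)} = #{j | q j} := by
    simpa only [Finset.card_filter] using Equiv.sum_comp σ fun j ↦ if q j then 1 else 0
  simp only [conformalPValue, Function.comp_apply, card_filter_comp fun j ↦ x (σ i) < x j,
    card_filter_comp fun j ↦ x j = x (σ i)]

lemma sum_volume_setOf_conformalPValue_le (x : ι → α) {u : ℝ} (hu : u ∈ Icc (0 : ℝ) 1) :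
    ∑ i, volume.restrict (Icc 0 1) {t : ℝ | conformalPValue x i t ≤ u} =
      Fintype.card ι * ENNReal.ofReal u := by
  set r : ℝ := (Fintype.card ι : ℝ)
  have tie_pos (i : ι) : (0 : ℝ) < #{j | x j = x i} :=
    Nat.cast_pos.2 (card_filter_eq_apply_pos x i)
  have section_volume (i : ι) :
      volume.restrict (Icc 0 1) {t : ℝ | conformalPValue x i t ≤ u} =
        ENNReal.ofReal ((min (u * r) #{j | x i ≤ x j} - min (u * r) #{j | x i < x j}) /
          #{j | x j = x i}) := by
    have hr : (0 : ℝ) < Fintype.card ι := Nat.cast_pos.2 (Fintype.card_pos_iff.2 ⟨i⟩)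
    simp only [conformalPValue, div_le_iff₀ hr]
    rw [volume_restrict_Icc_setOf_add_mul_le _ _ (tie_pos i), ← Nat.cast_add,
      card_filter_lt_add_card_filter_eq]
  have section_nonneg (i : ι) : 0 ≤
      (min (u * r) #{j | x i ≤ x j} - min (u * r) #{j | x i < x j}) / #{j | x j = x i} := by
    have greater_le : #{j | x i < x j} ≤ #{j | x i ≤ x j} :=
      Nat.le.intro (card_filter_lt_add_card_filter_eq x (x i))
    exact div_nonneg (sub_nonneg.2 (by gcongr)) (tie_pos i).le
  have hr : 0 ≤ r := Nat.cast_nonneg _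
  simp only [section_volume]
  rw [← ENNReal.ofReal_sum_of_nonneg fun i _ ↦ section_nonneg i,
    sum_sub_div_card_filter_eq x fun k ↦ min (u * r) k, min_eq_left (mul_le_of_le_one_left hr hu.2),
    Nat.cast_zero, min_eq_right (mul_nonneg hu.1 hr), sub_zero, mul_comm,
    ENNReal.ofReal_mul hr, ENNReal.ofReal_natCast]

variable [TopologicalSpace α] [OrderClosedTopology α] [SecondCountableTopology α]
  [MeasurableSpace α] [OpensMeasurableSpace α]

@[fun_prop]
lemma measurable_conformalPValue (i : ι) :
    Measurable fun z : (ι → α) × ℝ ↦ conformalPValue z.1 i z.2 := by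
  have measurable_score (j : ι) : Measurable fun z : (ι → α) × ℝ ↦ z.1 j := by fun_prop
  have measurable_greater (j : ι) :
      Measurable fun z : (ι → α) × ℝ ↦ if z.1 i < z.1 j then (1 : ℝ) else 0 :=
    .ite (measurableSet_lt (measurable_score i) (measurable_score j))
      measurable_const measurable_const
  have measurable_tie (j : ι) :
      Measurable fun z : (ι → α) × ℝ ↦ if z.1 j = z.1 i then (1 : ℝ) else 0 :=
    .ite (measurableSet_eq_fun (measurable_score j) (measurable_score i))
      measurable_const measurable_const
  simp only [conformalPValue, ← Finset.sum_boole]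
  fun_prop

lemma prod_volume_setOf_conformalPValue_le {ν : Measure (ι → α)} [IsProbabilityMeasure ν] {i₀ : ι}
    (hν : ∀ i, ∃ σ : Equiv.Perm ι, σ i₀ = i ∧ MeasurePreserving (fun x ↦ x ∘ σ) ν ν)
    {u : ℝ} (hu : u ∈ Icc (0 : ℝ) 1) :
    ν.prod (volume.restrict (Icc 0 1)) {z | conformalPValue z.1 i₀ z.2 ≤ u} =
      ENNReal.ofReal u := by
  set A : ι → Set ((ι → α) × ℝ) := fun i ↦ {z | conformalPValue z.1 i z.2 ≤ u}
  have hA (i : ι) : MeasurableSet (A i) :=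
    measurableSet_le (measurable_conformalPValue i) measurable_const
  have reference_indep (i : ι) :
      ν.prod (volume.restrict (Icc 0 1)) (A i) = ν.prod (volume.restrict (Icc 0 1)) (A i₀) := by
    obtain ⟨σ, rfl, hσ⟩ := hν i
    rw [← (hσ.prod (.id _)).measure_preimage (hA i₀).nullMeasurableSet]
    congr 1
    ext z
    simp [A, conformalPValue_comp_perm]
  have average : Fintype.card ι * ν.prod (volume.restrict (Icc 0 1)) (A i₀) =
      Fintype.card ι * ENNReal.ofReal u := calc
    _ = ∑ i, ν.prod (volume.restrict (Icc 0 1)) (A i) := by simp [reference_indep]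
    _ = ∫⁻ x, ∑ i, volume.restrict (Icc 0 1) {t : ℝ | conformalPValue x i t ≤ u} ∂ν := by
      simp only [Measure.prod_apply (hA _)]
      exact (lintegral_finsetSum _ fun i _ ↦ measurable_measure_prodMk_left (hA i)).symm
    _ = Fintype.card ι * ENNReal.ofReal u := by
      simp only [sum_volume_setOf_conformalPValue_le _ hu, lintegral_const, measure_univ, mul_one]
  have card_ne_zero : (Fintype.card ι : ℝ≥0∞) ≠ 0 :=
    Nat.cast_ne_zero.2 (Fintype.card_pos_iff.2 ⟨i₀⟩).ne'
  exact (ENNReal.mul_right_inj card_ne_zero (ENNReal.natCast_ne_top _)).1 average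

theorem conformal_p_value_uniform_general {Ω : Type*} [MeasurableSpace Ω] {P : Measure Ω}
    {X : Ω → ι → α} {i₀ : ι}
    (hX : ∀ i, ∃ σ : Equiv.Perm ι, σ i₀ = i ∧ IdentDistrib (fun ω ↦ X ω ∘ σ) X P P)
    {θ : Ω → ℝ} (hθ : HasLaw θ (volume.restrict (Icc 0 1)) P) (hindep : IndepFun X θ P)
    {u : ℝ} (hu : u ∈ Icc (0 : ℝ) 1) :
    P {ω | conformalPValue (X ω) i₀ (θ ω) ≤ u} = ENNReal.ofReal u := by
  have : IsProbabilityMeasure (volume.restrict (Icc (0 : ℝ) 1)) := ⟨by simp⟩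
  have : IsProbabilityMeasure P := hθ.isProbabilityMeasure
  have hXm : AEMeasurable X P := (hX i₀).choose_spec.2.aemeasurable_snd
  have : IsProbabilityMeasure (P.map X) := Measure.isProbabilityMeasure_map hXm
  have invariant (i : ι) : ∃ σ : Equiv.Perm ι, σ i₀ = i ∧
      MeasurePreserving (fun x ↦ x ∘ σ) (P.map X) (P.map X) := by
    obtain ⟨σ, hσ, hXσ⟩ := hX i
    have comp_measurable : Measurable fun x : ι → α ↦ x ∘ σ :=
      measurable_pi_lambda _ fun j ↦ measurable_pi_apply (σ j)
    refine ⟨σ, hσ, comp_measurable, ?_⟩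
    rw [AEMeasurable.map_map_of_aemeasurable comp_measurable.aemeasurable hXm]
    exact hXσ.map_eq
  have joint_law : HasLaw (fun ω ↦ (X ω, θ ω))
      ((P.map X).prod (volume.restrict (Icc 0 1))) P :=
    hindep.hasLaw_prod ⟨hXm, rfl⟩ hθ
  rw [← prod_volume_setOf_conformalPValue_le invariant hu]
  exact joint_law.measure_eq (measurableSet_le (measurable_conformalPValue i₀) measurable_const)

end ConformalPValue

/-- **Uniformity of a randomized conformal p-value.** If `(κ 0, ..., κ n)` (so `r = n + 1`
scores) is exchangeable and `θ ~ Unif(0,1)` is independent of the scores, then the randomized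
conformal p-value `p = (1/r) Σ_j (1{κ_j > κ_r} + θ·1{κ_j = κ_r})` is distributed as
`Unif(0,1)`. -/
theorem conformal_p_value_uniform
    {Ω : Type*} [MeasureSpace Ω] [IsProbabilityMeasure (ℙ : Measure Ω)]
    (n : ℕ) (κ : Fin (n + 1) → Ω → ℝ) (hκ : ∀ j, Measurable (κ j))
    (hexch : ∀ π : Equiv.Perm (Fin (n + 1)),
      Measure.map (fun ω => fun j => κ (π j) ω) ℙ
        = Measure.map (fun ω => fun j => κ j ω) ℙ)
    (θ : Ω → ℝ) (hθ : Measurable θ)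
    (hθunif : Measure.map θ ℙ = volume.restrict (Set.Icc (0 : ℝ) 1))
    (hindep : IndepFun (fun ω => fun j => κ j ω) θ ℙ)
    (p : Ω → ℝ)
    (hp : ∀ ω, p ω = (n + 1 : ℝ)⁻¹ * ∑ j : Fin (n + 1),
      ((if κ j ω > κ (Fin.last n) ω then (1 : ℝ) else 0)
        + θ ω * (if κ j ω = κ (Fin.last n) ω then (1 : ℝ) else 0))) :
    ∀ u ∈ Set.Icc (0 : ℝ) 1, ℙ {ω | p ω ≤ u} = ENNReal.ofReal u := by
  intro u hu
  have exchangeable (i : Fin (n + 1)) : ∃ σ : Equiv.Perm (Fin (n + 1)), σ (Fin.last n) = i ∧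
      IdentDistrib (fun ω ↦ (fun j ↦ κ j ω) ∘ σ) (fun ω j ↦ κ j ω) ℙ ℙ :=
    ⟨Equiv.swap i (Fin.last n), Equiv.swap_apply_right _ _,
      (measurable_pi_lambda _ fun _ ↦ hκ _).aemeasurable,
      (measurable_pi_lambda _ hκ).aemeasurable, hexch _⟩
  have p_eq (ω : Ω) : p ω = conformalPValue (fun j ↦ κ j ω) (Fin.last n) (θ ω) := by
    simp only [hp, conformalPValue, gt_iff_lt, Finset.sum_add_distrib, ← Finset.mul_sum,
      Finset.sum_boole, div_eq_inv_mul, Fintype.card_fin, Nat.cast_add_one]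
  simp only [p_eq]
  exact conformal_p_value_uniform_general exchangeable ⟨hθ.aemeasurable, hθunif⟩ hindep hu
end

section
/- Let 𝒳 and 𝒵 be measurable spaces, let (X_1, ..., X_t) be an exchangeable sequence of 𝒳-valued random variables, and let Z be a 𝒵-valued random element independent of (X_1, ..., X_t). Fix r ≤ t and a measurable function s : 𝒳 × ⟦𝒳^r⟧ × 𝒵 → ℝ, where ⟦𝒳^r⟧ denotes the set of unordered bags (multisets) of r elements of 𝒳. Define the scores κ_j = s(X_j ; ⟦X_1, ..., X_r⟧, Z) for j = 1, ..., r, where ⟦X_1, ..., X_r⟧ is the multiset of the first r data points. Then (κ_1, ..., κ_r) is an exchangeable sequence of real-valued random variables. -/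
open MeasureTheory ProbabilityTheory

/-!
A permutation of the selected data points extends to a permutation of all of them, and it only
permutes the scores: the bag does not change, so score `j` becomes score `π j`. Hence the score
vector is a permutation-equivariant function of the data and of `Z`, and it inherits the invariance
of the law of the pair (data, `Z`), which by independence is a product of an invariant law and the
law of `Z`.
-/

/-- The family `X` of random variables is exchangeable under `μ`: permuting its index set does not
change its joint law. Stating this with `IdentDistrib` also makes the family jointly a.e.
measurable, without which the law would be the junk value `0`. -/
def Exchangeable {Ω ι 𝒳 : Type*} [MeasurableSpace Ω] [MeasurableSpace 𝒳]
    (X : ι → Ω → 𝒳) (μ : Measure Ω) : Prop :=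
  ∀ π : Equiv.Perm ι, IdentDistrib (fun ω i => X (π i) ω) (fun ω i => X i ω) μ μ

/-- The family `X` is exchangeable given `Z`. This is encoded by the joint law of `X` and `Z`, which
must not change when `X` alone is permuted, so that no regular conditional distribution is
needed. -/
def ExchangeableGiven {Ω ι 𝒳 𝒵 : Type*} [MeasurableSpace Ω] [MeasurableSpace 𝒳]
    [MeasurableSpace 𝒵] (X : ι → Ω → 𝒳) (Z : Ω → 𝒵) (μ : Measure Ω) : Prop :=
  ∀ π : Equiv.Perm ι,
    IdentDistrib (fun ω => (fun i => X (π i) ω, Z ω)) (fun ω => (fun i => X i ω, Z ω)) μ μ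

/-- The vector of scores of the points `x j` against the whole family `x`, with auxiliary
element `z`. The bag of the points of `x` is represented by `x` itself, so this models scoring
against a bag when `s` is invariant under permutations of its second argument. -/
def bagScores {ι 𝒳 𝒵 E : Type*} (s : 𝒳 → (ι → 𝒳) → 𝒵 → E) (x : ι → 𝒳) (z : 𝒵) : ι → E :=
  fun j => s (x j) x z

section BagScores

variable {ι 𝒳 𝒵 E : Type*} {s : 𝒳 → (ι → 𝒳) → 𝒵 → E}

theorem bagScores_comp_perm
    (hsym : ∀ (x : 𝒳) (y : ι → 𝒳) (z : 𝒵) (π : Equiv.Perm ι), s x (y ∘ π) z = s x y z)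
    (x : ι → 𝒳) (z : 𝒵) (π : Equiv.Perm ι) :
    bagScores s (x ∘ π) z = bagScores s x z ∘ π :=
  funext fun j => hsym (x (π j)) x z π

theorem measurable_bagScores [MeasurableSpace 𝒳] [MeasurableSpace 𝒵] [MeasurableSpace E]
    (hs : Measurable fun q : 𝒳 × (ι → 𝒳) × 𝒵 => s q.1 q.2.1 q.2.2) :
    Measurable fun p : (ι → 𝒳) × 𝒵 => bagScores s p.1 p.2 := by
  refine measurable_pi_lambda _ fun j => ?_
  have hargs : Measurable fun p : (ι → 𝒳) × 𝒵 => (p.1 j, p.1, p.2) := by fun_prop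
  exact hs.comp hargs

end BagScores

section Exchangeability

variable {Ω ι η 𝒳 𝒵 E : Type*} [MeasurableSpace Ω] [MeasurableSpace 𝒳] [MeasurableSpace 𝒵]
  [MeasurableSpace E] {μ : Measure Ω} {X : ι → Ω → 𝒳} {Z : Ω → 𝒵}

theorem Exchangeable.exchangeableGiven_of_indepFun [IsFiniteMeasure μ] (hX : Exchangeable X μ)
    (hZ : AEMeasurable Z μ) (hindep : IndepFun (fun ω i => X i ω) Z μ) :
    ExchangeableGiven X Z μ := fun π =>
  have hperm : Measurable fun (x : ι → 𝒳) i => x (π i) := by fun_prop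
  (hX π).prodMk (.refl hZ) (hindep.comp hperm measurable_id) hindep

theorem ExchangeableGiven.exchangeable (h : ExchangeableGiven X Z μ) : Exchangeable X μ :=
  fun π => (h π).comp measurable_fst

theorem ExchangeableGiven.comp_embedding (h : ExchangeableGiven X Z μ) (e : η ↪ ι) :
    ExchangeableGiven (fun j => X (e j)) Z μ := by
  intro π
  have hrestrict : Measurable fun p : (ι → 𝒳) × 𝒵 => (fun j => p.1 (e j), p.2) := by fun_prop
  simpa only [Function.comp_def, Equiv.Perm.viaEmbedding_apply] using
    (h (π.viaEmbedding e)).comp hrestrict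

theorem ExchangeableGiven.map_of_equivariant (h : ExchangeableGiven X Z μ)
    {F : (ι → 𝒳) → 𝒵 → ι → E} (hF : Measurable fun p : (ι → 𝒳) × 𝒵 => F p.1 p.2)
    (hequiv : ∀ (x : ι → 𝒳) (z : 𝒵) (π : Equiv.Perm ι), F (x ∘ π) z = F x z ∘ π) :
    ExchangeableGiven (fun j ω => F (fun i => X i ω) (Z ω) j) Z μ := by
  intro π
  have hlaw := (h π).comp (hF.prodMk measurable_snd)
  have hpermuted (ω : Ω) :
      F (fun i => X (π i) ω) (Z ω) = fun j => F (fun i => X i ω) (Z ω) (π j) :=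
    hequiv (fun i => X i ω) (Z ω) π
  simpa only [Function.comp_def, hpermuted] using hlaw

theorem conformal_scores_exchangeable_general (h : ExchangeableGiven X Z μ) (e : η ↪ ι)
    {s : 𝒳 → (η → 𝒳) → 𝒵 → E}
    (hs : Measurable fun q : 𝒳 × (η → 𝒳) × 𝒵 => s q.1 q.2.1 q.2.2)
    (hsym : ∀ (x : 𝒳) (y : η → 𝒳) (z : 𝒵) (π : Equiv.Perm η), s x (y ∘ π) z = s x y z) :
    ExchangeableGiven (fun j ω => s (X (e j) ω) (fun i => X (e i) ω) (Z ω)) Z μ :=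
  (h.comp_embedding e).map_of_equivariant (measurable_bagScores hs) (bagScores_comp_perm hsym)

end Exchangeability

/-- **Exchangeability of conformal scores.** If `(X 0, ..., X (t-1))` is an exchangeable
sequence of `𝒳`-valued random variables, `Z` is a `𝒵`-valued random element independent of the
`X`'s, `r ≤ t`, and `s` is a measurable score function whose second argument — encoded as an
`r`-tuple — is treated symmetrically (i.e. as a bag/multiset of `r` elements of `𝒳`), then the
scores `κ j = s (X j) ⟦X 0, ..., X (r-1)⟧ Z`, `j = 0, ..., r-1`, form an exchangeable sequence
of real-valued random variables. -/
theorem conformal_scores_exchangeable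
    {Ω 𝒳 𝒵 : Type*} [MeasureSpace Ω] [IsProbabilityMeasure (ℙ : Measure Ω)]
    [MeasurableSpace 𝒳] [MeasurableSpace 𝒵]
    (t r : ℕ) (hrt : r ≤ t)
    (X : Fin t → Ω → 𝒳) (hX : ∀ i, Measurable (X i))
    (hexch : ∀ π : Equiv.Perm (Fin t),
      Measure.map (fun ω => fun i => X (π i) ω) ℙ
        = Measure.map (fun ω => fun i => X i ω) ℙ)
    (Z : Ω → 𝒵) (hZ : Measurable Z)
    (hindep : IndepFun (fun ω => fun i => X i ω) Z ℙ)
    (s : 𝒳 → (Fin r → 𝒳) → 𝒵 → ℝ)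
    (hs : Measurable fun q : 𝒳 × (Fin r → 𝒳) × 𝒵 => s q.1 q.2.1 q.2.2)
    (hsym : ∀ (x : 𝒳) (y : Fin r → 𝒳) (z : 𝒵) (π : Equiv.Perm (Fin r)),
      s x (y ∘ π) z = s x y z)
    (κ : Fin r → Ω → ℝ)
    (hκ : ∀ j ω, κ j ω
      = s (X (Fin.castLE hrt j) ω) (fun i => X (Fin.castLE hrt i) ω) (Z ω)) :
    ∀ π : Equiv.Perm (Fin r),
      Measure.map (fun ω => fun j => κ (π j) ω) ℙ
        = Measure.map (fun ω => fun j => κ j ω) ℙ := by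
  obtain rfl := funext₂ hκ
  have hX_exch : Exchangeable X ℙ := fun π =>
    ⟨(measurable_pi_lambda _ fun i => hX (π i)).aemeasurable,
      (measurable_pi_lambda _ hX).aemeasurable, hexch π⟩
  have hXZ_exch := hX_exch.exchangeableGiven_of_indepFun hZ.aemeasurable hindep
  have hκ_exch := conformal_scores_exchangeable_general hXZ_exch (Fin.castLEEmb hrt) hs hsym
  exact fun π => (hκ_exch.exchangeable π).map_eq
end

section
/- Let 𝒳 be a measurable space and let Q and R be probability measures on 𝒳 with densities q = dQ/d(Q+R) and r = dR/d(Q+R) with respect to Q + R. Let s* (x) = q(x)/r(x) denote the likelihood ratio score (taking values in [0, ∞], with the convention q(x)/0 = ∞ when q(x) > 0). Fix k ∈ {1, ..., n} and suppose X_1, ..., X_k are i.i.d. from R and X_{k+1}, ..., X_{n+1} are i.i.d. from Q, all mutually independent, and let θ_1, ..., θ_n be i.i.d. Unif(0,1) independent of the X's. For a measurable score function s, define the normalized rank functional T_n[s] = (1/n) Σ_{i=1}^n (1{s(X_i) < s(X_{n+1})} + θ_i·1{s(X_i) = s(X_{n+1})}). Then for every measurable s : 𝒳 → ℝ, E[T_n[s*]]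 ≥ E[T_n[s]]. -/
/-!
Averaging over the `θ i` replaces the tie weight by its mean `1/2`, so `E[T_n[s]]` is the mean over
`i` of `AUC(P i, Q) = P(s(X_i) < s(Y)) + P(s(X_i) = s(Y)) / 2` with `X_i ∼ P i` and `Y ∼ Q`
independent. When `P i = Q` this is `1/2` by exchangeability, whatever `s` is. When `P i = R`, the
identity `AUC(R, Q) + AUC(Q, R) = 1` shows that maximizing `AUC(R, Q)` amounts to maximizing
`AUC(R, Q) - AUC(Q, R)`, the integral of `(r x * q y - q x * r y) * K(s x, s y)` with a kernel `K`
that takes values in `[0, 1]`. For `s = q / r` the kernel is `1` where the weight is positive and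
`0` where it is negative, which is optimal pointwise.
-/

open MeasureTheory ProbabilityTheory

/-- The normalized rank functional `T_n[s]`, viewed as a function on the canonical space of
the data `(X 1, ..., X (n+1))` (first component) and the auxiliary randomization variables
`(θ 1, ..., θ n)` (second component):
`T_n[s](x, θ) = (1/n) Σ_{i=1}^n (1{s(x_i) < s(x_{n+1})} + θ_i · 1{s(x_i) = s(x_{n+1})})`. -/
noncomputable def rankStat {𝒳 β : Type*} [LinearOrder β] (n : ℕ) (s : 𝒳 → β)
    (p : (Fin (n + 1) → 𝒳) × (Fin n → ℝ)) : ℝ :=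
  (n : ℝ)⁻¹ * ∑ i : Fin n,
    ((if s (p.1 i.castSucc) < s (p.1 (Fin.last n)) then (1 : ℝ) else 0)
      + p.2 i * (if s (p.1 i.castSucc) = s (p.1 (Fin.last n)) then (1 : ℝ) else 0))

open scoped ENNReal

section RankKernel

variable {β : Type*} [LinearOrder β]

/-- The contribution `1{a < b} + c · 1{a = b}` of a score `a` to the rank of a score `b`, where a
tie counts with weight `c`: the summand of `rankStat`. -/
noncomputable def rankKernel (c : ℝ) (a b : β) : ℝ :=
  (if a < b then (1 : ℝ) else 0) + c * (if a = b then (1 : ℝ) else 0)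

lemma rankStat_eq_sum_rankKernel {𝒳 : Type*} (n : ℕ) (s : 𝒳 → β)
    (p : (Fin (n + 1) → 𝒳) × (Fin n → ℝ)) :
    rankStat n s p
      = (n : ℝ)⁻¹ * ∑ i : Fin n,
          rankKernel (p.2 i) (s (p.1 i.castSucc)) (s (p.1 (Fin.last n))) :=
  rfl

lemma rankKernel_of_lt (c : ℝ) {a b : β} (h : a < b) : rankKernel c a b = 1 := by
  simp [rankKernel, h, h.ne]

lemma rankKernel_of_gt (c : ℝ) {a b : β} (h : b < a) : rankKernel c a b = 0 := by
  simp [rankKernel, h.not_gt, h.ne']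

lemma rankKernel_self (c : ℝ) (a : β) : rankKernel c a a = c := by
  simp [rankKernel]

lemma rankKernel_swap (c : ℝ) (a b : β) : rankKernel (1 - c) b a = 1 - rankKernel c a b := by
  rcases lt_trichotomy a b with h | rfl | h
  · rw [rankKernel_of_lt c h, rankKernel_of_gt _ h, sub_self]
  · rw [rankKernel_self, rankKernel_self]
  · rw [rankKernel_of_gt c h, rankKernel_of_lt _ h, sub_zero]

lemma rankKernel_mem_Icc {c : ℝ} (hc : c ∈ Set.Icc 0 1) (a b : β) :
    rankKernel c a b ∈ Set.Icc 0 1 := by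
  rcases lt_trichotomy a b with h | rfl | h
  · simp [rankKernel_of_lt c h]
  · rwa [rankKernel_self]
  · simp [rankKernel_of_gt c h]

lemma norm_rankKernel_le (c : ℝ) (a b : β) : ‖rankKernel c a b‖ ≤ 1 + ‖c‖ := by
  rcases lt_trichotomy a b with h | rfl | h
  · simp [rankKernel_of_lt c h]
  · simp [rankKernel_self]
  · simpa [rankKernel_of_gt c h] using add_nonneg zero_le_one (abs_nonneg c)

lemma mul_rankKernel_le_mul_rankKernel {γ : Type*} [LinearOrder γ] {c w : ℝ}
    (hc : c ∈ Set.Icc 0 1) (a b : β) {a' b' : γ} (hpos : 0 < w → a' < b') (hneg : w < 0 → b' < a') :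
    w * rankKernel c a b ≤ w * rankKernel c a' b' := by
  obtain ⟨h0, h1⟩ := rankKernel_mem_Icc hc a b
  rcases lt_trichotomy w 0 with hw | rfl | hw
  · rw [rankKernel_of_gt c (hneg hw)]
    exact mul_le_mul_of_nonpos_left h0 hw.le
  · simp
  · rw [rankKernel_of_lt c (hpos hw)]
    exact mul_le_mul_of_nonneg_left h1 hw.le

lemma integral_rankKernel {Ω : Type*} [MeasurableSpace Ω] {P : Measure Ω} [IsProbabilityMeasure P]
    {c : Ω → ℝ} (hc : Integrable c P) (a b : β) :
    ∫ ω, rankKernel (c ω) a b ∂P = rankKernel (∫ ω, c ω ∂P) a b := by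
  simp only [rankKernel]
  rw [integral_add (integrable_const _) (hc.mul_const _), integral_const, integral_mul_const,
    probReal_univ, one_smul]

end RankKernel

section Integrability

variable {Ω Ω' β : Type*} [MeasurableSpace Ω] [MeasurableSpace Ω'] [LinearOrder β]
  [TopologicalSpace β] [OrderClosedTopology β] [SecondCountableTopology β] [MeasurableSpace β]
  [OpensMeasurableSpace β]

lemma integrable_rankKernel {μ : Measure Ω} [IsFiniteMeasure μ] {c : Ω → ℝ} (hc : Integrable c μ)
    {f g : Ω → β} (hf : Measurable f) (hg : Measurable g) :
    Integrable (fun ω => rankKernel (c ω) (f ω) (g ω)) μ := by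
  have hlt : Measurable fun ω => if f ω < g ω then (1 : ℝ) else 0 :=
    Measurable.ite (measurableSet_lt hf hg) measurable_const measurable_const
  have heq : Measurable fun ω => if f ω = g ω then (1 : ℝ) else 0 :=
    Measurable.ite (measurableSet_eq_fun hf hg) measurable_const measurable_const
  exact ((integrable_const (1 : ℝ)).add hc.norm).mono'
    (hlt.aestronglyMeasurable.add (hc.aestronglyMeasurable.mul heq.aestronglyMeasurable))
    (ae_of_all _ fun ω => norm_rankKernel_le (c ω) (f ω) (g ω))

lemma integrable_prod_rankKernel {μ : Measure Ω} [IsFiniteMeasure μ] {P : Measure Ω'}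
    [IsFiniteMeasure P] {c : Ω' → ℝ} (hc : Integrable c P) {f g : Ω → β} (hf : Measurable f)
    (hg : Measurable g) :
    Integrable (fun z => rankKernel (c z.2) (f z.1) (g z.1)) (μ.prod P) :=
  integrable_rankKernel (hc.comp_snd μ) (hf.comp measurable_fst) (hg.comp measurable_fst)

lemma integral_prod_rankKernel {μ : Measure Ω} [IsFiniteMeasure μ] {P : Measure Ω'}
    [IsProbabilityMeasure P] {c : Ω' → ℝ} (hc : Integrable c P) {f g : Ω → β} (hf : Measurable f)
    (hg : Measurable g) :
    ∫ z, rankKernel (c z.2) (f z.1) (g z.1) ∂μ.prod P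
      = ∫ ω, rankKernel (∫ ω', c ω' ∂P) (f ω) (g ω) ∂μ := by
  rw [integral_prod _ (integrable_prod_rankKernel hc hf hg)]
  simp only [integral_rankKernel hc]

end Integrability

section AUC

variable {𝒳 β : Type*} [MeasurableSpace 𝒳] [LinearOrder β]

/-- The area under the ROC curve of the score `s` for distinguishing `Q` from `P`: the probability
that `s X < s Y` plus half the probability that `s X = s Y`, for independent `X ∼ P` and `Y ∼ Q`. -/
noncomputable def auc (P Q : Measure 𝒳) (s : 𝒳 → β) : ℝ :=
  ∫ z, rankKernel 2⁻¹ (s z.1) (s z.2) ∂P.prod Q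

variable [TopologicalSpace β] [OrderClosedTopology β] [SecondCountableTopology β]
  [MeasurableSpace β] [OpensMeasurableSpace β]

lemma integrable_rankKernel_prod (c : ℝ) (P Q : Measure 𝒳) [IsFiniteMeasure P] [IsFiniteMeasure Q]
    {s : 𝒳 → β} (hs : Measurable s) :
    Integrable (fun z => rankKernel c (s z.1) (s z.2)) (P.prod Q) :=
  integrable_rankKernel (integrable_const c) (hs.comp measurable_fst) (hs.comp measurable_snd)

lemma auc_add_auc_swap (P Q : Measure 𝒳) [IsFiniteMeasure P] [IsFiniteMeasure Q] {s : 𝒳 → β}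
    (hs : Measurable s) : auc P Q s + auc Q P s = P.real Set.univ * Q.real Set.univ := by
  have swap (z : 𝒳 × 𝒳) :
      rankKernel 2⁻¹ (s z.2) (s z.1) = 1 - rankKernel 2⁻¹ (s z.1) (s z.2) := by
    rw [← rankKernel_swap]
    norm_num
  have hQP : auc Q P s = ∫ z, (1 - rankKernel 2⁻¹ (s z.1) (s z.2)) ∂P.prod Q := by
    simp only [← swap]
    exact (integral_prod_swap fun z : 𝒳 × 𝒳 => rankKernel 2⁻¹ (s z.1) (s z.2)).symm
  rw [hQP, integral_sub (integrable_const _) (integrable_rankKernel_prod 2⁻¹ P Q hs), auc,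
    add_sub_cancel, integral_const, smul_eq_mul, mul_one, ← Set.univ_prod_univ,
    measureReal_prod_prod]

lemma auc_self (P : Measure 𝒳) [IsFiniteMeasure P] {s : 𝒳 → β} (hs : Measurable s) :
    auc P P s = P.real Set.univ ^ 2 / 2 := by
  linarith [auc_add_auc_swap P P hs]

end AUC

section NeymanPearson

lemma ennreal_div_lt_div_of_mul_lt_mul {a b c d : ℝ≥0∞} (ha : a ≠ ∞) (hb : b ≠ ∞) (hd : d ≠ ∞)
    (h : a * d < c * b) : a / b < c / d := by
  have hb0 : b ≠ 0 := by rintro rfl; simp at h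
  have hc0 : c ≠ 0 := by rintro rfl; simp at h
  rw [ENNReal.div_lt_iff (.inl hb0) (.inl hb)]
  rcases eq_or_ne d 0 with rfl | hd0
  · rw [ENNReal.div_zero hc0, ENNReal.top_mul hb0]
    exact ha.lt_top
  · rwa [← ENNReal.mul_div_right_comm, ENNReal.lt_div_iff_mul_lt (.inl hd0) (.inl hd)]

lemma integral_withDensity_sub_le {α : Type*} [MeasurableSpace α] {ν : Measure α} {f g : α → ℝ≥0∞}
    (hf : Measurable f) (hg : Measurable g) (hf_top : ∀ᵐ x ∂ν, f x < ∞) (hg_top : ∀ᵐ x ∂ν, g x < ∞)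
    {φ ψ : α → ℝ} (hφf : Integrable φ (ν.withDensity f)) (hφg : Integrable φ (ν.withDensity g))
    (hψf : Integrable ψ (ν.withDensity f)) (hψg : Integrable ψ (ν.withDensity g))
    (h : ∀ᵐ x ∂ν, ((f x).toReal - (g x).toReal) * φ x ≤ ((f x).toReal - (g x).toReal) * ψ x) :
    ∫ x, φ x ∂ν.withDensity f - ∫ x, φ x ∂ν.withDensity g
      ≤ ∫ x, ψ x ∂ν.withDensity f - ∫ x, ψ x ∂ν.withDensity g := by
  rw [integrable_withDensity_iff_integrable_smul' hf hf_top] at hφf hψf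
  rw [integrable_withDensity_iff_integrable_smul' hg hg_top] at hφg hψg
  simp only [integral_withDensity_eq_integral_toReal_smul hf hf_top,
    integral_withDensity_eq_integral_toReal_smul hg hg_top]
  rw [← integral_sub hφf hφg, ← integral_sub hψf hψg]
  refine integral_mono_ae (hφf.sub hφg) (hψf.sub hψg) ?_
  filter_upwards [h] with x hx
  simpa only [smul_eq_mul, sub_mul] using hx

variable {𝒳 β : Type*} [MeasurableSpace 𝒳] [LinearOrder β]

lemma mul_rankKernel_le_mul_rankKernel_div {q₁ r₁ q₂ r₂ : ℝ≥0∞} (hq₁ : q₁ ≠ ∞) (hr₁ : r₁ ≠ ∞)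
    (hq₂ : q₂ ≠ ∞) (hr₂ : r₂ ≠ ∞) {c : ℝ} (hc : c ∈ Set.Icc 0 1) (a b : β) :
    ((r₁ * q₂).toReal - (q₁ * r₂).toReal) * rankKernel c a b
      ≤ ((r₁ * q₂).toReal - (q₁ * r₂).toReal) * rankKernel c (q₁ / r₁) (q₂ / r₂) := by
  have hrq : r₁ * q₂ ≠ ∞ := ENNReal.mul_ne_top hr₁ hq₂
  have hqr : q₁ * r₂ ≠ ∞ := ENNReal.mul_ne_top hq₁ hr₂
  refine mul_rankKernel_le_mul_rankKernel hc a b (fun hpos => ?_) (fun hneg => ?_)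
  · rw [sub_pos, ENNReal.toReal_lt_toReal hqr hrq, mul_comm r₁] at hpos
    exact ennreal_div_lt_div_of_mul_lt_mul hq₁ hr₁ hr₂ hpos
  · rw [sub_neg, ENNReal.toReal_lt_toReal hrq hqr, mul_comm r₁] at hneg
    exact ennreal_div_lt_div_of_mul_lt_mul hq₂ hr₂ hr₁ hneg

variable [TopologicalSpace β] [OrderClosedTopology β] [SecondCountableTopology β]
  [MeasurableSpace β] [OpensMeasurableSpace β]

theorem auc_withDensity_le_auc_div {ν : Measure 𝒳} [SFinite ν] {q r : 𝒳 → ℝ≥0∞} (hq : Measurable q)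
    (hr : Measurable r) (hq_int : ∫⁻ x, q x ∂ν ≠ ∞) (hr_int : ∫⁻ x, r x ∂ν ≠ ∞) {s : 𝒳 → β}
    (hs : Measurable s) :
    auc (ν.withDensity r) (ν.withDensity q) s
      ≤ auc (ν.withDensity r) (ν.withDensity q) fun x => q x / r x := by
  set Q := ν.withDensity q
  set R := ν.withDensity r
  have : IsFiniteMeasure Q := isFiniteMeasure_withDensity hq_int
  have : IsFiniteMeasure R := isFiniteMeasure_withDensity hr_int
  have hqr : Measurable fun x => q x / r x := hq.div hr
  suffices auc R Q s - auc Q R s ≤ auc R Q (fun x => q x / r x) - auc Q R fun x => q x / r x by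
    linarith [auc_add_auc_swap R Q hs, auc_add_auc_swap R Q hqr]
  have hRQ : R.prod Q = (ν.prod ν).withDensity fun z => r z.1 * q z.2 := prod_withDensity hr hq
  have hQR : Q.prod R = (ν.prod ν).withDensity fun z => q z.1 * r z.2 := prod_withDensity hq hr
  have hfin : ∀ᵐ z ∂ν.prod ν, (q z.1 < ∞ ∧ r z.1 < ∞) ∧ q z.2 < ∞ ∧ r z.2 < ∞ := by
    have h : ∀ᵐ x ∂ν, q x < ∞ ∧ r x < ∞ := (ae_lt_top hq hq_int).and (ae_lt_top hr hr_int)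
    exact (Measure.quasiMeasurePreserving_fst.ae h).and (Measure.quasiMeasurePreserving_snd.ae h)
  simp only [auc, hRQ, hQR]
  refine integral_withDensity_sub_le (by fun_prop) (by fun_prop)
    (hfin.mono fun z hz => ENNReal.mul_lt_top hz.1.2 hz.2.1)
    (hfin.mono fun z hz => ENNReal.mul_lt_top hz.1.1 hz.2.2)
    (hRQ ▸ integrable_rankKernel_prod 2⁻¹ R Q hs) (hQR ▸ integrable_rankKernel_prod 2⁻¹ Q R hs)
    (hRQ ▸ integrable_rankKernel_prod 2⁻¹ R Q hqr) (hQR ▸ integrable_rankKernel_prod 2⁻¹ Q R hqr) ?_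
  filter_upwards [hfin] with z ⟨⟨hq₁, hr₁⟩, hq₂, hr₂⟩
  exact mul_rankKernel_le_mul_rankKernel_div hq₁.ne hr₁.ne hq₂.ne hr₂.ne (by norm_num) _ _

theorem auc_le_auc_rnDeriv_div {Q R ν : Measure 𝒳} [IsFiniteMeasure Q] [IsFiniteMeasure R]
    [SigmaFinite ν] (hQ : Q ≪ ν) (hR : R ≪ ν) {s : 𝒳 → β} (hs : Measurable s) :
    auc R Q s ≤ auc R Q fun x => Q.rnDeriv ν x / R.rnDeriv ν x := by
  have h := auc_withDensity_le_auc_div (Measure.measurable_rnDeriv Q ν)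
    (Measure.measurable_rnDeriv R ν) (Measure.lintegral_rnDeriv_lt_top Q ν).ne
    (Measure.lintegral_rnDeriv_lt_top R ν).ne hs
  rwa [Measure.withDensity_rnDeriv_eq Q ν hQ, Measure.withDensity_rnDeriv_eq R ν hR] at h

end NeymanPearson

section ExpectedRank

lemma measurePreserving_eval_prodMk_eval {ι : Type*} [Fintype ι] {𝒳 : ι → Type*}
    [∀ i, MeasurableSpace (𝒳 i)] (P : ∀ i, Measure (𝒳 i)) [∀ i, IsProbabilityMeasure (P i)]
    {i j : ι} (hij : i ≠ j) :
    MeasurePreserving (fun x : ∀ i, 𝒳 i => (x i, x j)) (Measure.pi P) ((P i).prod (P j)) := by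
  have hi := measurePreserving_eval P i
  have hj := measurePreserving_eval P j
  have hind : IndepFun (Function.eval i) (Function.eval j) (Measure.pi P) :=
    (iIndepFun_pi (X := fun _ x => x) fun _ => aemeasurable_id).indepFun hij
  refine ⟨hi.measurable.prodMk hj.measurable, ?_⟩
  rw [(indepFun_iff_map_prod_eq_prod_map_map hi.aemeasurable hj.aemeasurable).1 hind, hi.map_eq,
    hj.map_eq]

instance isProbabilityMeasure_volume_restrict_Icc_zero_one :
    IsProbabilityMeasure ((volume : Measure ℝ).restrict (Set.Icc 0 1)) :=
  ⟨by simp⟩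

lemma integral_eval_pi_uniform {ι : Type*} [Fintype ι] (i : ι) :
    ∫ t, t i ∂(Measure.pi fun _ : ι => volume.restrict (Set.Icc (0 : ℝ) 1)) = 2⁻¹ := by
  rw [integral_comp_eval (μ := fun _ : ι => (volume : Measure ℝ).restrict (Set.Icc 0 1))
    (f := fun x : ℝ => x) aestronglyMeasurable_id, integral_Icc_eq_integral_Ioc,
    ← intervalIntegral.integral_of_le zero_le_one]
  norm_num

variable {𝒳 β : Type*} [MeasurableSpace 𝒳] [LinearOrder β] [TopologicalSpace β]
  [OrderClosedTopology β] [SecondCountableTopology β] [MeasurableSpace β] [OpensMeasurableSpace β]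

theorem integral_rankStat {n : ℕ} (P : Fin (n + 1) → Measure 𝒳) [∀ i, IsProbabilityMeasure (P i)]
    (τ : Measure (Fin n → ℝ)) [IsProbabilityMeasure τ] (hτ : ∀ i, ∫ t, t i ∂τ = 2⁻¹) {s : 𝒳 → β}
    (hs : Measurable s) :
    ∫ p, rankStat n s p ∂(Measure.pi P).prod τ
      = (n : ℝ)⁻¹ * ∑ i : Fin n, auc (P i.castSucc) (P (Fin.last n)) s := by
  have hτ_int (i : Fin n) : Integrable (fun t => t i) τ :=
    .of_integral_ne_zero (by rw [hτ]; norm_num)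
  have hs_eval (j : Fin (n + 1)) : Measurable fun x : Fin (n + 1) → 𝒳 => s (x j) :=
    hs.comp (measurable_pi_apply j)
  simp only [rankStat_eq_sum_rankKernel]
  rw [integral_const_mul, integral_finsetSum _ fun i _ =>
    integrable_prod_rankKernel (hτ_int i) (hs_eval _) (hs_eval _)]
  congr! 2 with i
  have hpair := measurePreserving_eval_prodMk_eval P (Fin.castSucc_lt_last i).ne
  rw [integral_prod_rankKernel (hτ_int i) (hs_eval _) (hs_eval _), hτ, auc, ← hpair.map_eq,
    integral_map hpair.aemeasurable]
  rw [hpair.map_eq]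
  exact (integrable_rankKernel_prod _ _ _ hs).aestronglyMeasurable

theorem conformal_neyman_pearson_expected_rank_general {Q R ν : Measure 𝒳} [IsProbabilityMeasure Q]
    [IsProbabilityMeasure R] [SigmaFinite ν] (hQ : Q ≪ ν) (hR : R ≪ ν) {n : ℕ}
    {P : Fin (n + 1) → Measure 𝒳} (hP : ∀ i, P i = R ∨ P i = Q) (hP_last : P (Fin.last n) = Q)
    {τ : Measure (Fin n → ℝ)} [IsProbabilityMeasure τ] (hτ : ∀ i, ∫ t, t i ∂τ = 2⁻¹) {s : 𝒳 → β}
    (hs : Measurable s) :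
    ∫ p, rankStat n s p ∂(Measure.pi P).prod τ
      ≤ ∫ p, rankStat n (fun x => Q.rnDeriv ν x / R.rnDeriv ν x) p ∂(Measure.pi P).prod τ := by
  have hlr : Measurable fun x => Q.rnDeriv ν x / R.rnDeriv ν x :=
    (Measure.measurable_rnDeriv Q ν).div (Measure.measurable_rnDeriv R ν)
  have (i : Fin (n + 1)) : IsProbabilityMeasure (P i) := by
    rcases hP i with h | h <;> rw [h] <;> infer_instance
  rw [integral_rankStat P τ hτ hs, integral_rankStat P τ hτ hlr, hP_last]
  gcongr with i
  rcases hP i.castSucc with h | h <;> rw [h]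
  · exact auc_le_auc_rnDeriv_div hQ hR hs
  · rw [auc_self Q hs, auc_self Q hlr]

end ExpectedRank

/-- **Conformal Neyman–Pearson lemma (expected rank version).** Under the alternative where
`X 1, ..., X k` are i.i.d. from `R` and `X (k+1), ..., X (n+1)` are i.i.d. from `Q`, all
mutually independent, with `θ 1, ..., θ n` i.i.d. `Unif(0,1)` independent of the `X`'s (so the
joint law is the product measure `μ` below), the likelihood ratio score
`s* = (dQ/d(Q+R)) / (dR/d(Q+R))` (valued in `[0,∞]`, with `q/0 = ∞` when `q > 0`) maximizes
the expected normalized rank: `E[T_n[s*]] ≥ E[T_n[s]]` for every measurable `s : 𝒳 → ℝ`. -/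
theorem conformal_neyman_pearson_expected_rank
    {𝒳 : Type*} [MeasurableSpace 𝒳]
    (Q R : Measure 𝒳) [IsProbabilityMeasure Q] [IsProbabilityMeasure R]
    (n k : ℕ) (hk1 : 1 ≤ k) (hkn : k ≤ n)
    (μ : Measure ((Fin (n + 1) → 𝒳) × (Fin n → ℝ)))
    (hμ : μ = (Measure.pi fun i : Fin (n + 1) => if (i : ℕ) < k then R else Q).prod
      (Measure.pi fun _ : Fin n => volume.restrict (Set.Icc (0 : ℝ) 1)))
    (sstar : 𝒳 → ENNReal)
    (hsstar : sstar = fun x => Q.rnDeriv (Q + R) x / R.rnDeriv (Q + R) x)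
    (s : 𝒳 → ℝ) (hs : Measurable s) :
    ∫ p, rankStat n sstar p ∂μ ≥ ∫ p, rankStat n s p ∂μ := by
  subst hμ hsstar
  exact conformal_neyman_pearson_expected_rank_general
    (Measure.absolutelyContinuous_of_le (Measure.le_add_right le_rfl))
    (Measure.absolutelyContinuous_of_le (Measure.le_add_left le_rfl))
    (fun _ => ite_eq_or_eq _ _ _) (if_neg (by simpa using hkn)) integral_eval_pi_uniform hs
end

section
/- Let X_1, ..., X_{n+1} be an exchangeable sequence of 𝒳-valued random variables and let f : 𝒳 → [0, ∞) be a measurable function such that P( Σ_{i=1}^{n+1} f(X_i) > 0 ) = 1. Then E[ f(X_{n+1}) / ( (1/(n+1)) Σ_{i=1}^{n+1} f(X_i) ) ] = 1. In particular, the statistic f(X_{n+1}) / ( (1/(n+1)) Σ_{i=1}^{n+1} f(X_i) ) is an e-variable for testing the exchangeability of X_1, ..., X_{n+1}. -/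
open MeasureTheory ProbabilityTheory

/-!
Let `R i` be the ratio of the `i`-th value to the mean of all of them. Permuting the sample permutes
the family `R`, so if the law of the sample is invariant under a permutation carrying `i` to `j`,
then `R i` and `R j` are identically distributed. Under a transitive group of such permutations all
the `R i` have the same expectation, which is `1` because their sum is the sample size.
-/

/-- The ratio of the `i`-th entry of a finite family of reals to the mean of the family. For the
family `f (X j)` it is the conformal e-variable. It is `0` if the mean vanishes. -/
noncomputable def ratioToMean {ι : Type*} [Fintype ι] (y : ι → ℝ) (i : ι) : ℝ :=
  y i / ((Fintype.card ι : ℝ)⁻¹ * ∑ j, y j)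

section RatioToMean

variable {ι : Type*} [Fintype ι]

lemma ratioToMean_comp_equiv (y : ι → ℝ) (σ : Equiv.Perm ι) (i : ι) :
    ratioToMean (fun j => y (σ j)) i = ratioToMean y (σ i) := by
  simp only [ratioToMean, Equiv.sum_comp σ y]

lemma sum_ratioToMean {y : ι → ℝ} (hy : ∑ j, y j ≠ 0) :
    ∑ i, ratioToMean y i = Fintype.card ι := by
  simp only [ratioToMean]
  rw [← Finset.sum_div, div_mul_cancel_right₀ hy, inv_inv]

lemma ratioToMean_nonneg {y : ι → ℝ} (hy : ∀ j, 0 ≤ y j) (i : ι) : 0 ≤ ratioToMean y i :=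
  div_nonneg (hy i) (mul_nonneg (by positivity) (Finset.sum_nonneg fun j _ => hy j))

lemma ratioToMean_le_card {y : ι → ℝ} (hy : ∀ j, 0 ≤ y j) (i : ι) :
    ratioToMean y i ≤ Fintype.card ι := by
  have y_le_sum : y i ≤ ∑ j, y j :=
    Finset.single_le_sum (fun j _ => hy j) (Finset.mem_univ i)
  calc ratioToMean y i = Fintype.card ι * (y i / ∑ j, y j) := by
        rw [ratioToMean, div_mul_eq_div_div, div_inv_eq_mul, mul_comm (y i), mul_div_assoc]
    _ ≤ Fintype.card ι :=
        mul_le_of_le_one_right (Nat.cast_nonneg _)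
          (div_le_one_of_le₀ y_le_sum (Finset.sum_nonneg fun j _ => hy j))

lemma measurable_ratioToMean (i : ι) : Measurable fun y : ι → ℝ => ratioToMean y i := by
  unfold ratioToMean
  fun_prop

variable {Ω : Type*} [MeasurableSpace Ω] {μ : Measure Ω} {Y : ι → Ω → ℝ}

lemma integrable_ratioToMean [IsFiniteMeasure μ] (hY : AEMeasurable (fun ω j => Y j ω) μ)
    (hY0 : ∀ᵐ ω ∂μ, ∀ j, 0 ≤ Y j ω) (i : ι) :
    Integrable (fun ω => ratioToMean (fun j => Y j ω) i) μ := by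
  refine Integrable.of_bound
    ((measurable_ratioToMean i).comp_aemeasurable hY).aestronglyMeasurable (Fintype.card ι) ?_
  filter_upwards [hY0] with ω hω
  rw [Real.norm_of_nonneg (ratioToMean_nonneg hω i)]
  exact ratioToMean_le_card hω i

lemma identDistrib_ratioToMean_perm {σ : Equiv.Perm ι}
    (hσ : IdentDistrib (fun ω j => Y (σ j) ω) (fun ω j => Y j ω) μ μ) (i : ι) :
    IdentDistrib (fun ω => ratioToMean (fun j => Y j ω) (σ i))
      (fun ω => ratioToMean (fun j => Y j ω) i) μ μ := by
  have ratio_perm (ω : Ω) :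
      ratioToMean (fun j => Y (σ j) ω) i = ratioToMean (fun j => Y j ω) (σ i) :=
    ratioToMean_comp_equiv (fun j => Y j ω) σ i
  simpa only [Function.comp_def, ratio_perm] using hσ.comp (measurable_ratioToMean i)

theorem integral_ratioToMean_eq_one (G : Type*) [Group G] [MulAction G ι]
    [MulAction.IsPretransitive G ι] [IsProbabilityMeasure μ]
    (hinv : ∀ g : G, IdentDistrib (fun ω j => Y (g • j) ω) (fun ω j => Y j ω) μ μ)
    (hY0 : ∀ᵐ ω ∂μ, ∀ j, 0 ≤ Y j ω) (hpos : ∀ᵐ ω ∂μ, 0 < ∑ j, Y j ω) (i : ι) :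
    ∫ ω, ratioToMean (fun j => Y j ω) i ∂μ = 1 := by
  have integral_eq (j : ι) :
      ∫ ω, ratioToMean (fun k => Y k ω) j ∂μ = ∫ ω, ratioToMean (fun k => Y k ω) i ∂μ := by
    obtain ⟨g, rfl⟩ := MulAction.exists_smul_eq G i j
    exact (identDistrib_ratioToMean_perm (σ := MulAction.toPerm g) (hinv g) i).integral_eq
  have card_ne_zero : (Fintype.card ι : ℝ) ≠ 0 :=
    Nat.cast_ne_zero.2 (Fintype.card_pos_iff.2 ⟨i⟩).ne'
  refine mul_left_cancel₀ card_ne_zero ?_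
  calc (Fintype.card ι : ℝ) * ∫ ω, ratioToMean (fun k => Y k ω) i ∂μ
      = ∑ j, ∫ ω, ratioToMean (fun k => Y k ω) j ∂μ := by
        rw [Fintype.sum_congr _ _ integral_eq, Finset.sum_const, Finset.card_univ, nsmul_eq_mul]
    _ = ∫ ω, ∑ j, ratioToMean (fun k => Y k ω) j ∂μ :=
        (integral_finsetSum _ fun j _ =>
          integrable_ratioToMean (hinv 1).aemeasurable_snd hY0 j).symm
    _ = ∫ _, (Fintype.card ι : ℝ) ∂μ :=
        integral_congr_ae (hpos.mono fun ω hω => sum_ratioToMean hω.ne')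
    _ = Fintype.card ι * 1 := by rw [integral_const, probReal_univ, one_smul, mul_one]

end RatioToMean

theorem conformal_e_variable_expectation_one_general
    {Ω 𝒳 ι G : Type*} [MeasurableSpace Ω] {μ : Measure Ω} [IsProbabilityMeasure μ]
    [MeasurableSpace 𝒳] [Fintype ι] [Group G] [MulAction G ι] [MulAction.IsPretransitive G ι]
    {X : ι → Ω → 𝒳}
    (hinv : ∀ g : G, IdentDistrib (fun ω i => X (g • i) ω) (fun ω i => X i ω) μ μ)
    {f : 𝒳 → ℝ} (hf : Measurable f) (hf0 : ∀ x, 0 ≤ f x)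
    (hpos : ∀ᵐ ω ∂μ, 0 < ∑ i, f (X i ω)) (i : ι) :
    ∫ ω, f (X i ω) / ((Fintype.card ι : ℝ)⁻¹ * ∑ j, f (X j ω)) ∂μ = 1 := by
  have hf_pi : Measurable fun (x : ι → 𝒳) j => f (x j) := by fun_prop
  exact integral_ratioToMean_eq_one G (Y := fun j ω => f (X j ω))
    (fun g => (hinv g).comp hf_pi) (.of_forall fun ω j => hf0 (X j ω)) hpos i

/-- **The likelihood-ratio conformal e-variable has expectation one.** Let
`(X 1, ..., X (n+1))` be an exchangeable sequence of `𝒳`-valued random variables and let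
`f : 𝒳 → [0,∞)` be measurable with `Σ_{i=1}^{n+1} f(X_i) > 0` almost surely. Then
`E[ f(X_{n+1}) / ((1/(n+1)) Σ_{i=1}^{n+1} f(X_i)) ] = 1`; in particular this statistic is an
e-variable for testing exchangeability. -/
theorem conformal_e_variable_expectation_one
    {Ω 𝒳 : Type*} [MeasureSpace Ω] [IsProbabilityMeasure (ℙ : Measure Ω)]
    [MeasurableSpace 𝒳]
    (n : ℕ) (X : Fin (n + 1) → Ω → 𝒳) (hX : ∀ i, Measurable (X i))
    (hexch : ∀ π : Equiv.Perm (Fin (n + 1)),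
      Measure.map (fun ω => fun i => X (π i) ω) ℙ
        = Measure.map (fun ω => fun i => X i ω) ℙ)
    (f : 𝒳 → ℝ) (hf : Measurable f) (hf0 : ∀ x, 0 ≤ f x)
    (hpos : ℙ {ω | 0 < ∑ i : Fin (n + 1), f (X i ω)} = 1) :
    ∫ ω, f (X (Fin.last n) ω)
      / ((n + 1 : ℝ)⁻¹ * ∑ i : Fin (n + 1), f (X i ω)) ∂ℙ = 1 := by
  have hpos_ae : ∀ᵐ ω, 0 < ∑ i, f (X i ω) :=
    (ae_iff_prob_eq_one (by fun_prop)).2 hpos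
  have hinv (π : Equiv.Perm (Fin (n + 1))) :
      IdentDistrib (fun ω i => X (π • i) ω) (fun ω i => X i ω) :=
    ⟨by fun_prop, by fun_prop, hexch π⟩
  simpa using conformal_e_variable_expectation_one_general hinv hf hf0 hpos_ae (Fin.last n)
end
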